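/- Let $v_0,\dots,v_4$ be a generic $5$-tuple of vectors in $\mathbb{C}^3$ (i.e., every subset of at most $3$ of them is linearly independent), and let $L_i = \mathbb{C} v_i$ be the lines they span. Then there exist $5$ lines $\ell_0,\dots,\ell_4$ in $\mathbb{C}^2$ and surjective linear maps $f_i : \mathbb{C}^3 \to \mathbb{C}^2$ such that $f_i(L_i) = 0$ and $f_i(L_j) = \ell_j$ for all $j \neq i$. -/

import Mathlib

/-!
The tuple `v` has a Gale dual: vectors `w j` in the plane such that the linear relations among
the `v j` are exactly the tuples `φ (w j)`, where `φ` runs through the linear forms on the plane.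
Hence `v j ↦ c j • w j` extends to a linear map if and only if `∑ j, φ (w j) • c j • w j = 0` for
all `φ`, that is, if and only if `c` is a relation among the points `(w j)²` of the Veronese conic
in a 3-dimensional space. These points are generic because the `w j` are, so any four of them
satisfy a relation with all four coefficients nonzero; leaving out the `i`-th point gives the
coefficients of `f i`, and the lines `ℓ j = K w j` do not depend on `i`.
-/

open Finset Module Submodule

section Descent

variable {R ι M N : Type*} [Ring R] [Fintype ι] [AddCommGroup M] [Module R M] [AddCommGroup N]
  [Module R N] {v : ι → M} {u : ι → N}

lemma exists_linearMap_forall_apply_eq (hv : span R (Set.range v) = ⊤)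
    (h : ∀ a : ι → R, ∑ j, a j • v j = 0 → ∑ j, a j • u j = 0) :
    ∃ f : M →ₗ[R] N, ∀ j, f (v j) = u j := by
  classical
  let p := Fintype.linearCombination R v
  let e := p.quotKerEquivOfSurjective
    ((span_range_eq_top_iff_surjective_fintypeLinearCombination R v).1 hv)
  let g : ((ι → R) ⧸ p.ker) →ₗ[R] N := p.ker.liftQ (Fintype.linearCombination R u) h
  refine ⟨g ∘ₗ e.symm, fun j ↦ ?_⟩
  have he : e (p.ker.mkQ (Pi.single j 1)) = v j := by
    simp [e, p]
  calc g (e.symm (v j)) = g (p.ker.mkQ (Pi.single j 1)) := by rw [← he, e.symm_apply_apply]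
    _ = Fintype.linearCombination R u (Pi.single j 1) := p.ker.liftQ_apply _ _
    _ = u j := by simp

end Descent

lemma surjective_of_apply_eq_smul {K ι V U : Type*} [DivisionRing K] [AddCommGroup V]
    [Module K V] [AddCommGroup U] [Module K U] {v : ι → V} {w : ι → U} {s : Set ι} {c : ι → K}
    {f : V →ₗ[K] U} (hw : span K (w '' s) = ⊤) (hc : ∀ j ∈ s, c j ≠ 0)
    (hf : ∀ j ∈ s, f (v j) = c j • w j) :
    Function.Surjective f := by
  have hle : span K (w '' s) ≤ f.range := by
    refine span_le.2 ?_
    rintro _ ⟨j, hj, rfl⟩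
    exact ⟨(c j)⁻¹ • v j, by rw [map_smul, hf j hj, inv_smul_smul₀ (hc j hj)]⟩
  exact LinearMap.range_eq_top.1 (top_le_iff.1 (hw.ge.trans hle))

/-- A tuple of vectors is generic if all its subtuples of length at most the dimension of the
ambient space are linearly independent. In infinite dimension `finrank` is `0`, so the notion is
meant for finite-dimensional spaces. -/
def IsGeneric (K : Type*) {ι V : Type*} [Field K] [AddCommGroup V] [Module K V] (v : ι → V) :
    Prop :=
  ∀ s : Finset ι, #s ≤ finrank K V → LinearIndepOn K v s

/-- `w` is a Gale dual of `v` if evaluation at the vectors `w j` identifies the linear forms on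
the space of `w` with the linear relations among the vectors `v j`. -/
def IsGaleDual (K : Type*) {ι V U : Type*} [Field K] [Fintype ι] [AddCommGroup V] [Module K V]
    [AddCommGroup U] [Module K U] (v : ι → V) (w : ι → U) : Prop :=
  ∃ e : Dual K U ≃ₗ[K] (Fintype.linearCombination K v).ker, ∀ φ j, (e φ : ι → K) j = φ (w j)

section Generic

variable {K ι V U : Type*} [Field K] [AddCommGroup V] [Module K V] [AddCommGroup U] [Module K U]
  {v : ι → V} {w : ι → U}

namespace IsGeneric

lemma of_card_eq [Fintype ι] (hι : finrank K V ≤ Fintype.card ι)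
    (h : ∀ s : Finset ι, #s = finrank K V → LinearIndepOn K v s) : IsGeneric K v := by
  intro s hs
  obtain ⟨t, hst, ht⟩ := exists_superset_card_eq hs hι
  exact (h t ht).mono (coe_subset.2 hst)

lemma ne_zero (hv : IsGeneric K v) (hV : 0 < finrank K V) (j : ι) : v j ≠ 0 :=
  LinearIndepOn.ne_zero (hv {j} (by rwa [card_singleton])) (by simp)

lemma span_image_eq_top [FiniteDimensional K V] (hv : IsGeneric K v) {s : Finset ι}
    (hs : finrank K V ≤ #s) : span K (v '' s) = ⊤ := by
  obtain ⟨t, hts, ht⟩ := exists_subset_card_eq hs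
  have htop : span K (v '' t) = ⊤ := by
    have := LinearIndependent.span_eq_top_of_card_eq_finrank' (hv t ht.le) (by simpa using ht)
    rwa [Set.image_eq_range]
  exact top_le_iff.1 (htop.ge.trans (span_mono (Set.image_mono (coe_subset.2 hts))))

lemma exists_relation_support_eq [Fintype ι] [FiniteDimensional K V] (hv : IsGeneric K v)
    {s : Finset ι} (hs : #s = finrank K V + 1) :
    ∃ c : ι → K, ∑ j, c j • v j = 0 ∧ ∀ j, c j ≠ 0 ↔ j ∈ s := by
  classical
  have hdep : ¬ LinearIndepOn K v s := fun h ↦ by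
    have := LinearIndependent.fintype_card_le_finrank h
    simp only [coe_sort_coe, Fintype.card_coe] at this
    omega
  obtain ⟨c, hc, i, hi, hci⟩ := not_linearIndepOn_finset_iff.1 hdep
  have hne : ∀ j ∈ s, c j ≠ 0 := by
    intro j hj hcj
    have herase : ∑ k ∈ s.erase j, c k • v k = 0 := by
      rw [sum_erase s (by simp [hcj]), hc]
    have hindep := hv (s.erase j) (by simp [card_erase_of_mem hj, hs])
    have hij : i ≠ j := fun h ↦ hci (h ▸ hcj)
    exact hci (linearIndepOn_finset_iff.1 hindep c herase i (mem_erase.2 ⟨hij, hi⟩))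
  refine ⟨fun j ↦ if j ∈ s then c j else 0, ?_, fun j ↦ ?_⟩
  · simpa [ite_smul] using hc
  · simpa using hne j

lemma det_pair_ne_zero {w : ι → Fin 2 → K} (hw : IsGeneric K w) {i j : ι} (hij : i ≠ j) :
    (Matrix.of ![w i, w j]).det ≠ 0 := by
  classical
  have hindep : LinearIndepOn K w {i, j} := by
    simpa using hw {i, j} (by simp [card_pair hij])
  have hpair : LinearIndependent K ![w i, w j] :=
    LinearIndependent.pair_iff.2 ((LinearIndepOn.pair_iff w hij).1 hindep)
  exact ((Matrix.isUnit_iff_isUnit_det _).1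
    (Matrix.linearIndependent_rows_iff_isUnit.1 hpair)).ne_zero

-- The rows are the images of the points `w j` on the rational normal curve of degree `n - 1`.
lemma rectVandermonde [Fintype ι] {w : ι → Fin 2 → K} (hw : IsGeneric K w) {n : ℕ}
    (hn : n ≤ Fintype.card ι) :
    IsGeneric K (Matrix.rectVandermonde (fun j ↦ w j 0) (fun j ↦ w j 1) n).row := by
  refine of_card_eq (by simpa using hn) fun s hs ↦ ?_
  let e : Fin n ≃ s := (s.equivFinOfCardEq (by simpa using hs)).symm
  have hdet : (Matrix.projVandermonde (fun k ↦ w (e k) 0) fun k ↦ w (e k) 1).det ≠ 0 := by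
    rw [Matrix.det_projVandermonde]
    refine prod_ne_zero_iff.2 fun k _ ↦ prod_ne_zero_iff.2 fun l hl ↦ ?_
    have hlk : (e l : ι) ≠ e k := fun h ↦ (mem_Ioi.1 hl).ne' (e.injective (Subtype.ext h))
    simpa [Matrix.det_fin_two, mul_comm] using hw.det_pair_ne_zero hlk
  exact (linearIndependent_equiv e).1 (Matrix.linearIndependent_rows_of_det_ne_zero hdet)

end IsGeneric

variable [Fintype ι]

lemma exists_isGaleDual [FiniteDimensional K U] (hv : span K (Set.range v) = ⊤)
    (h : finrank K V + finrank K U = Fintype.card ι) :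
    ∃ w : ι → U, IsGaleDual K v w := by
  let p := Fintype.linearCombination K v
  have hrank : finrank K p.ker + finrank K V = Fintype.card ι := by
    have hp : p.range = ⊤ := (Fintype.range_linearCombination K v).trans hv
    have := p.finrank_range_add_finrank_ker
    rw [hp, finrank_top, finrank_fintype_fun_eq_card] at this
    omega
  let e : Dual K U ≃ₗ[K] p.ker :=
    LinearEquiv.ofFinrankEq _ _ (by rw [Subspace.dual_finrank_eq]; omega)
  refine ⟨fun j ↦ (evalEquiv K U).symm (LinearMap.proj j ∘ₗ p.ker.subtype ∘ₗ e), e, fun φ j ↦ ?_⟩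
  simp

namespace IsGaleDual

lemma exists_dual_apply_eq (h : IsGaleDual K v w) {a : ι → K} (ha : ∑ j, a j • v j = 0) :
    ∃ φ : Dual K U, ∀ j, φ (w j) = a j := by
  obtain ⟨e, he⟩ := h
  exact ⟨e.symm ⟨a, ha⟩, fun j ↦ by rw [← he, e.apply_symm_apply]⟩

lemma sum_dual_apply_smul_eq_zero (h : IsGaleDual K v w) (φ : Dual K U) :
    ∑ j, φ (w j) • v j = 0 := by
  obtain ⟨e, he⟩ := h
  simpa only [LinearMap.mem_ker, Fintype.linearCombination_apply, he] using (e φ).2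

lemma dual_eq_zero (h : IsGaleDual K v w) {φ : Dual K U} (hφ : ∀ j, φ (w j) = 0) : φ = 0 := by
  obtain ⟨e, he⟩ := h
  exact e.map_eq_zero_iff.1 (Subtype.ext (funext fun j ↦ (he φ j).trans (hφ j)))

lemma isGeneric (h : IsGaleDual K v w) (hv : IsGeneric K v)
    (hcard : finrank K V + finrank K U = Fintype.card ι) : IsGeneric K w := by
  classical
  refine .of_card_eq (by omega) fun s hs ↦ ?_
  suffices hspan : span K (w '' s) = ⊤ by
    refine linearIndependent_of_top_le_span_of_card_eq_finrank ?_ (by simpa using hs)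
    rw [← hspan, Set.image_eq_range]
  by_contra hspan
  obtain ⟨φ, hφ, hle⟩ := exists_le_ker_of_lt_top _ (lt_top_iff_ne_top.2 hspan)
  have hs0 : ∀ j ∈ s, φ (w j) = 0 := fun j hj ↦ hle (subset_span ⟨j, hj, rfl⟩)
  have hsum : ∑ j ∈ sᶜ, φ (w j) • v j = 0 := by
    rw [← h.sum_dual_apply_smul_eq_zero φ]
    exact sum_subset (subset_univ _) fun j _ hj ↦ by simp [hs0 j (by simpa using hj)]
  have hsc0 := linearIndepOn_finset_iff.1 (hv sᶜ (by rw [card_compl]; omega)) _ hsum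
  refine hφ (h.dual_eq_zero fun j ↦ ?_)
  by_cases hj : j ∈ s
  · exact hs0 j hj
  · exact hsc0 j (mem_compl.2 hj)

end IsGaleDual

section Conic

variable {w : ι → Fin 2 → K} {c : ι → K}

lemma sum_mul_mul_eq_zero_of_rectVandermonde
    (hc : ∑ j, c j • (Matrix.rectVandermonde (fun j ↦ w j 0) (fun j ↦ w j 1) 3).row j = 0)
    (k l : Fin 2) : ∑ j, c j * (w j k * w j l) = 0 := by
  have h11 : ∑ j, c j * (w j 1 * w j 1) = 0 := by
    simpa [Matrix.rectVandermonde_apply, pow_two] using congrFun hc 0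
  have h01 : ∑ j, c j * (w j 0 * w j 1) = 0 := by
    simpa [Matrix.rectVandermonde_apply] using congrFun hc 1
  have h00 : ∑ j, c j * (w j 0 * w j 0) = 0 := by
    simpa [Matrix.rectVandermonde_apply, pow_two] using congrFun hc 2
  fin_cases k <;> fin_cases l <;> simp [h00, h01, h11, mul_comm (w _ 1) (w _ 0)]

lemma sum_dual_apply_smul_eq_zero_of_rectVandermonde
    (hc : ∑ j, c j • (Matrix.rectVandermonde (fun j ↦ w j 0) (fun j ↦ w j 1) 3).row j = 0)
    (φ : Dual K (Fin 2 → K)) : ∑ j, φ (w j) • c j • w j = 0 := by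
  ext l
  let b : Fin 2 → Fin 2 → K := fun k i ↦ if k = i then 1 else 0
  calc (∑ j, φ (w j) • c j • w j) l
      = ∑ j, φ (w j) * (c j * w j l) := by
        simp only [Finset.sum_apply, Pi.smul_apply, smul_eq_mul]
    _ = ∑ j, ∑ k, φ (b k) * (c j * (w j k * w j l)) := by
        refine sum_congr rfl fun j _ ↦ ?_
        rw [LinearMap.pi_apply_eq_sum_univ φ (w j), sum_mul]
        refine sum_congr rfl fun k _ ↦ ?_
        rw [smul_eq_mul]
        ring
    _ = ∑ k, φ (b k) * ∑ j, c j * (w j k * w j l) := by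
        rw [sum_comm]
        simp only [mul_sum]
    _ = 0 := by simp [sum_mul_mul_eq_zero_of_rectVandermonde hc]

lemma IsGaleDual.exists_linearMap_apply_eq_smul (h : IsGaleDual K v w)
    (hv : span K (Set.range v) = ⊤)
    (hc : ∑ j, c j • (Matrix.rectVandermonde (fun j ↦ w j 0) (fun j ↦ w j 1) 3).row j = 0) :
    ∃ f : V →ₗ[K] (Fin 2 → K), ∀ j, f (v j) = c j • w j := by
  refine exists_linearMap_forall_apply_eq hv fun a ha ↦ ?_
  obtain ⟨φ, hφ⟩ := h.exists_dual_apply_eq ha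
  simpa only [hφ] using sum_dual_apply_smul_eq_zero_of_rectVandermonde hc φ

end Conic

theorem stmt4_general (hV : finrank K V = 3) (hι : Fintype.card ι = 5) (hv : IsGeneric K v) :
    ∃ (ℓ : ι → Submodule K (Fin 2 → K)) (f : ι → V →ₗ[K] (Fin 2 → K)),
      (∀ j, finrank K (ℓ j) = 1) ∧
      ∀ i, Function.Surjective (f i) ∧ (span K {v i}).map (f i) = ⊥ ∧
        ∀ j, j ≠ i → (span K {v j}).map (f i) = ℓ j := by
  classical
  have : FiniteDimensional K V := .of_finrank_pos (by omega)
  have hspan : span K (Set.range v) = ⊤ := by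
    simpa using hv.span_image_eq_top (s := univ) (by rw [card_univ]; omega)
  have hcard : finrank K V + finrank K (Fin 2 → K) = Fintype.card ι := by simp [hV, hι]
  obtain ⟨w, hvw⟩ := exists_isGaleDual hspan hcard
  have hw := hvw.isGeneric hv hcard
  have hconic := hw.rectVandermonde (n := 3) (by omega)
  choose c hc hsupp using fun i ↦
    hconic.exists_relation_support_eq (s := univ.erase i) (by simp [hι])
  choose f hf using fun i ↦ hvw.exists_linearMap_apply_eq_smul hspan (hc i)
  refine ⟨fun j ↦ span K {w j}, f, fun j ↦ finrank_span_singleton (hw.ne_zero (by simp) j),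
    fun i ↦ ⟨?_, ?_, fun j hj ↦ ?_⟩⟩
  · exact surjective_of_apply_eq_smul (hw.span_image_eq_top (s := univ.erase i) (by simp [hι]))
      (fun j hj ↦ (hsupp i j).2 hj) fun j _ ↦ hf i j
  · have hci : c i i = 0 := by simpa using (hsupp i i).not
    rw [map_span, Set.image_singleton, hf, hci, zero_smul, span_zero_singleton]
  · have hcj : c i j ≠ 0 := (hsupp i j).2 (by simpa using hj)
    rw [map_span, Set.image_singleton, hf, span_singleton_smul_eq hcj.isUnit]

end Generic

theorem stmt4 (v : Fin 5 → (Fin 3 → ℂ))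
    (hgen : ∀ s : Finset (Fin 5), s.card ≤ 3 →
      LinearIndependent ℂ (fun i : {x // x ∈ s} => v i)) :
    ∃ (ℓ : Fin 5 → Submodule ℂ (Fin 2 → ℂ))
      (f : Fin 5 → ((Fin 3 → ℂ) →ₗ[ℂ] (Fin 2 → ℂ))),
      (∀ j, Module.finrank ℂ (ℓ j) = 1) ∧
      ∀ i, Function.Surjective (f i) ∧
        (Submodule.span ℂ {v i}).map (f i) = ⊥ ∧
        ∀ j, j ≠ i → (Submodule.span ℂ {v j}).map (f i) = ℓ j :=
  stmt4_general (by simp) (by simp) fun s hs ↦ hgen s (by simpa using hs)
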